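/- Fix constants γ, δ > 0. With high probability there do not exist a color i ∈ [q] and sets S ⊆ A, T ⊆ B with |S| = |T| = ⌈γ·n/log n⌉ such that e_i(S,T) ≥ δ·|S|·log n/log log n. -/

import Mathlib

open MeasureTheory Filter Finset Asymptotics

/-- Discrete measurable structure on edge states: `none` = non-edge, `some i` = edge of color `cᵢ`. -/
instance (q : ℕ) : MeasurableSpace (Option (Fin q)) := ⊤

/-- Distribution of the state of a single pair: non-edge with probability `1-p`,
an edge of color `cᵢ` with probability `αᵢ·p`. -/
noncomputable def colorM (q : ℕ) (α : Fin q → ℝ) (p : ℝ) : Measure (Option (Fin q)) :=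
  ENNReal.ofReal (1 - p) • Measure.dirac none +
    ∑ i : Fin q, ENNReal.ofReal (α i * p) • Measure.dirac (some i)

/-- The randomly colored random bipartite graph on parts `A = B = Fin n`:
independently, each pair `(a,b)` is a non-edge with probability `1-p` and an
edge of color `cᵢ` with probability `αᵢ·p`.  A sample is a function
`f : Fin n × Fin n → Option (Fin q)`. -/
noncomputable def graphM (n q : ℕ) (α : Fin q → ℝ) (p : ℝ) :
    Measure (Fin n × Fin n → Option (Fin q)) :=
  Measure.pi fun _ => colorM q α p

/-!
Fix a color and sides `S`, `T` of size `s = ⌈γ n / log n⌉`. The expected number of edges of that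
color between them is at most `s² p = O(s)`, whereas `δ s log n / log log n` are asked for. With
parameter `θ = (log log n) / 2`, Chernoff's bound for a sum of independent indicators gives
probability at most `exp (s (O(√(log n)) - δ (log n) / 2))`. There are at most `q (e n / s)^(2s)`
choices of color and sides, that is `exp (s · O(log log n))`, so the union bound tends to zero.
-/

open ProbabilityTheory

section Chernoff

variable {Ω ι : Type*} [MeasurableSpace Ω] {μ : Measure Ω}

lemma mgf_indicator_one_le_exp [IsProbabilityMeasure μ] {A : Set Ω} (hA : MeasurableSet A)
    (θ : ℝ) : mgf (A.indicator 1) μ θ ≤ Real.exp ((Real.exp θ - 1) * μ.real A) := by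
  have hexp : (fun ω ↦ Real.exp (θ * A.indicator 1 ω)) =
      fun ω ↦ A.indicator (fun _ ↦ Real.exp θ - 1) ω + 1 := by
    funext ω
    by_cases hω : ω ∈ A <;> simp [hω]
  calc mgf (A.indicator 1) μ θ = (Real.exp θ - 1) * μ.real A + 1 := by
        rw [mgf, hexp, integral_add ((integrable_const _).indicator hA) (integrable_const _),
          integral_indicator_const _ hA]
        simp [mul_comm]
    _ ≤ Real.exp ((Real.exp θ - 1) * μ.real A) := Real.add_one_le_exp _

lemma measureReal_le_card_filter_mem_le_exp {A : ι → Set Ω} [∀ ω, DecidablePred (ω ∈ A ·)]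
    (hA : ∀ e, MeasurableSet (A e)) (hindep : iIndepSet A μ) (U : Finset ι) {θ : ℝ} (hθ : 0 ≤ θ)
    (x : ℝ) :
    μ.real {ω | x ≤ #{e ∈ U | ω ∈ A e}} ≤
      Real.exp ((Real.exp θ - 1) * ∑ e ∈ U, μ.real (A e) - θ * x) := by
  have := hindep.isProbabilityMeasure
  let X : ι → Ω → ℝ := fun e ↦ (A e).indicator 1
  have hX : iIndepFun X μ := hindep.iIndepFun_indicator
  have hXmeas : ∀ e, Measurable (X e) := fun e ↦ measurable_one.indicator (hA e)
  have hXmem : ∀ e ω, X e ω ∈ Set.Icc 0 1 := fun e ω ↦ by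
    by_cases hω : ω ∈ A e <;> simp [X, hω]
  have hcard : ∀ ω, (∑ e ∈ U, X e) ω = #{e ∈ U | ω ∈ A e} := fun ω ↦ by
    simp [X, Set.indicator_apply]
  calc μ.real {ω | x ≤ #{e ∈ U | ω ∈ A e}} = μ.real {ω | x ≤ (∑ e ∈ U, X e) ω} := by
        simp only [hcard]
    _ ≤ Real.exp (-θ * x) * mgf (∑ e ∈ U, X e) μ θ :=
        measure_ge_le_exp_mul_mgf x hθ <| hX.integrable_exp_mul_sum hXmeas fun e _ ↦
          integrable_exp_mul_of_mem_Icc (hXmeas e).aemeasurable (ae_of_all _ (hXmem e))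
    _ = Real.exp (-θ * x) * ∏ e ∈ U, mgf (X e) μ θ := by rw [hX.mgf_sum hXmeas]
    _ ≤ Real.exp (-θ * x) * ∏ e ∈ U, Real.exp ((Real.exp θ - 1) * μ.real (A e)) := by
        gcongr with e
        · exact fun _ _ ↦ mgf_nonneg
        · exact mgf_indicator_one_le_exp (hA e) θ
    _ = Real.exp ((Real.exp θ - 1) * ∑ e ∈ U, μ.real (A e) - θ * x) := by
        rw [← Real.exp_sum, ← mul_sum, ← Real.exp_add]
        ring_nf

end Chernoff

lemma iIndepSet_setOf_apply_mem_pi {ι : Type*} [Fintype ι] {X : ι → Type*}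
    [∀ e, MeasurableSpace (X e)] (μ : ∀ e, Measure (X e)) [∀ e, IsProbabilityMeasure (μ e)]
    {C : ∀ e, Set (X e)} (hC : ∀ e, MeasurableSet (C e)) :
    iIndepSet (fun e ↦ {f : ∀ e, X e | f e ∈ C e}) (Measure.pi μ) := by
  have hmeas : ∀ e, MeasurableSet {f : ∀ e, X e | f e ∈ C e} := fun e ↦
    measurable_pi_apply e (hC e)
  rw [iIndepSet_iff_meas_biInter hmeas]
  intro U
  exact (iIndepFun_pi fun _ ↦ aemeasurable_id).measure_inter_preimage_eq_mul U fun e _ ↦ hC e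

lemma tendsto_measure_compl_of_tendsto_measureReal_zero {β : Type*} {l : Filter β}
    {Ω : β → Type*} [∀ b, MeasurableSpace (Ω b)] {μ : ∀ b, Measure (Ω b)} {E : ∀ b, Set (Ω b)}
    (hE : ∀ b, MeasurableSet (E b)) (hμ : ∀ᶠ b in l, IsProbabilityMeasure (μ b))
    (hlim : Tendsto (fun b ↦ (μ b).real (E b)) l (nhds 0)) :
    Tendsto (fun b ↦ μ b (E b)ᶜ) l (nhds 1) := by
  have hsub : Tendsto (fun b ↦ ENNReal.ofReal (1 - (μ b).real (E b))) l (nhds 1) := by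
    simpa using ENNReal.tendsto_ofReal (hlim.const_sub 1)
  refine hsub.congr' ?_
  filter_upwards [hμ] with b hb
  rw [← probReal_compl_eq_one_sub (hE b), ofReal_measureReal]

section ColoredGraph

variable {n q : ℕ} {α : Fin q → ℝ} {p : ℝ}

lemma isProbabilityMeasure_colorM (hα : ∀ i, 0 ≤ α i) (hsum : ∑ i, α i = 1)
    (hp : p ∈ Set.Icc 0 1) : IsProbabilityMeasure (colorM q α p) := by
  have hαp : ∀ i ∈ univ, 0 ≤ α i * p := fun i _ ↦ mul_nonneg (hα i) hp.1
  refine ⟨?_⟩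
  simp only [colorM, Measure.add_apply, Measure.smul_apply, Measure.finsetSum_apply, smul_eq_mul,
    measure_univ, mul_one]
  rw [← ENNReal.ofReal_sum_of_nonneg hαp,
    ← ENNReal.ofReal_add (sub_nonneg.2 hp.2) (sum_nonneg hαp), ← sum_mul, hsum]
  simp

lemma isProbabilityMeasure_graphM (hα : ∀ i, 0 ≤ α i) (hsum : ∑ i, α i = 1)
    (hp : p ∈ Set.Icc 0 1) : IsProbabilityMeasure (graphM n q α p) :=
  have := isProbabilityMeasure_colorM hα hsum hp
  inferInstanceAs (IsProbabilityMeasure (Measure.pi fun _ ↦ colorM q α p))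

lemma colorM_real_singleton_some {i : Fin q} (h : 0 ≤ α i * p) :
    (colorM q α p).real {some i} = α i * p := by
  simp [colorM, Measure.real, Set.indicator_apply, h]

lemma graphM_real_setOf_apply_eq_some (hα : ∀ i, 0 ≤ α i) (hsum : ∑ i, α i = 1)
    (hp : p ∈ Set.Icc 0 1) (e : Fin n × Fin n) (i : Fin q) :
    (graphM n q α p).real {f | f e = some i} = α i * p := by
  have := isProbabilityMeasure_colorM hα hsum hp
  rw [← colorM_real_singleton_some (mul_nonneg (hα i) hp.1)]
  exact (measurePreserving_eval (fun _ ↦ colorM q α p) e).measureReal_preimage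
    (MeasurableSet.singleton _).nullMeasurableSet

/-- The number `e_i(S, T)` of edges of color `i` between `S` and `T` in the colored bipartite
graph `f`. -/
def colorEdgeCount {A B C : Type*} [DecidableEq C] (f : A × B → Option C) (i : C)
    (S : Finset A) (T : Finset B) : ℕ :=
  #{e ∈ S ×ˢ T | f e = some i}

lemma graphM_real_le_colorEdgeCount_le_exp (hα : ∀ i, 0 ≤ α i) (hsum : ∑ i, α i = 1)
    (hp : p ∈ Set.Icc 0 1) (i : Fin q) (S T : Finset (Fin n)) {θ : ℝ} (hθ : 0 ≤ θ) (x : ℝ) :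
    (graphM n q α p).real {f | x ≤ colorEdgeCount f i S T} ≤
      Real.exp (Real.exp θ * (#S * #T * p) - θ * x) := by
  have := isProbabilityMeasure_colorM hα hsum hp
  have hαi : α i ≤ 1 := hsum ▸ single_le_sum (fun j _ ↦ hα j) (mem_univ i)
  have hindep : iIndepSet (fun e ↦ {f : Fin n × Fin n → Option (Fin q) | f e = some i})
      (graphM n q α p) :=
    iIndepSet_setOf_apply_mem_pi (fun _ ↦ colorM q α p) fun _ ↦ .singleton (some i)
  refine (measureReal_le_card_filter_mem_le_exp (fun _ ↦ .of_discrete) hindep (S ×ˢ T) hθ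
    x).trans ?_
  simp only [graphM_real_setOf_apply_eq_some hα hsum hp, sum_const, card_product, nsmul_eq_mul,
    Nat.cast_mul]
  have hp0 := hp.1
  have hαi0 := hα i
  gcongr
  · exact sub_le_self (Real.exp θ) zero_le_one
  · exact mul_le_of_le_one_left hp0 hαi

/-- The event that some color has at least `x` edges between some `S` and `T` of size `s`. -/
def denseColorEvent (n q s : ℕ) (x : ℝ) : Set (Fin n × Fin n → Option (Fin q)) :=
  {f | ∃ (i : Fin q) (S T : Finset (Fin n)), #S = s ∧ #T = s ∧ x ≤ colorEdgeCount f i S T}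

lemma graphM_real_denseColorEvent_le (hα : ∀ i, 0 ≤ α i) (hsum : ∑ i, α i = 1)
    (hp : p ∈ Set.Icc 0 1) (s : ℕ) {θ : ℝ} (hθ : 0 ≤ θ) (x : ℝ) :
    (graphM n q α p).real (denseColorEvent n q s x) ≤
      q * (n.choose s : ℝ) ^ 2 * Real.exp (Real.exp θ * (s ^ 2 * p) - θ * x) := by
  have := isProbabilityMeasure_graphM (n := n) hα hsum hp
  let I : Finset (Fin q × Finset (Fin n) × Finset (Fin n)) :=
    univ ×ˢ powersetCard s univ ×ˢ powersetCard s univ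
  have hcover : denseColorEvent n q s x ⊆
      ⋃ k ∈ I, {f | x ≤ colorEdgeCount f k.1 k.2.1 k.2.2} := by
    rintro f ⟨i, S, T, hS, hT, hx⟩
    exact Set.mem_biUnion (x := (i, S, T)) (by simp [I, hS, hT]) hx
  have hterm : ∀ k ∈ I, (graphM n q α p).real {f | x ≤ colorEdgeCount f k.1 k.2.1 k.2.2} ≤
      Real.exp (Real.exp θ * (s ^ 2 * p) - θ * x) := by
    rintro ⟨i, S, T⟩ hk
    obtain ⟨hS, hT⟩ : #S = s ∧ #T = s := by simpa [I] using hk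
    simpa [hS, hT, sq] using graphM_real_le_colorEdgeCount_le_exp hα hsum hp i S T hθ x
  calc (graphM n q α p).real (denseColorEvent n q s x)
      ≤ ∑ k ∈ I, (graphM n q α p).real {f | x ≤ colorEdgeCount f k.1 k.2.1 k.2.2} :=
        (measureReal_mono hcover (measure_ne_top _ _)).trans (measureReal_biUnion_finset_le _ _)
    _ ≤ #I • Real.exp (Real.exp θ * (s ^ 2 * p) - θ * x) := sum_le_card_nsmul _ _ _ hterm
    _ = q * (n.choose s : ℝ) ^ 2 * Real.exp (Real.exp θ * (s ^ 2 * p) - θ * x) := by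
        simp [I, sq]

lemma choose_le_exp_mul_one_add_log {n s : ℕ} {K : ℝ} (hK : 0 < K) (hn : n ≤ K * s) :
    (n.choose s : ℝ) ≤ Real.exp (s * (1 + Real.log K)) :=
  calc (n.choose s : ℝ) ≤ (n : ℝ) ^ s / (s.factorial : ℝ) := Nat.choose_le_pow_div s n
    _ ≤ (K * s) ^ s / (s.factorial : ℝ) := by gcongr
    _ = (s : ℝ) ^ s / (s.factorial : ℝ) * K ^ s := by rw [mul_pow]; ring
    _ ≤ Real.exp s * K ^ s := by
        gcongr
        exact Real.pow_div_factorial_le_exp _ s.cast_nonneg s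
    _ = Real.exp (s * (1 + Real.log K)) := by
        rw [mul_add, mul_one, Real.exp_add, Real.exp_nat_mul (Real.log K), Real.exp_log hK]

lemma graphM_real_denseColorEvent_mul_le_exp (hα : ∀ i, 0 ≤ α i) (hsum : ∑ i, α i = 1)
    (hp : p ∈ Set.Icc 0 1) {s : ℕ} {θ K D : ℝ} (hθ : 0 ≤ θ) (hK : 0 < K) (hn : n ≤ K * s)
    (hD : s * p ≤ D) (y : ℝ) :
    (graphM n q α p).real (denseColorEvent n q s (s * y)) ≤
      q * Real.exp (s * (2 * (1 + Real.log K) + D * Real.exp θ - θ * y)) :=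
  calc (graphM n q α p).real (denseColorEvent n q s (s * y))
      ≤ q * (n.choose s : ℝ) ^ 2 * Real.exp (Real.exp θ * (s * (s * p)) - θ * (s * y)) := by
        simpa only [sq, mul_assoc] using
          graphM_real_denseColorEvent_le (n := n) hα hsum hp s hθ (s * y)
    _ ≤ q * Real.exp (s * (1 + Real.log K)) ^ 2 *
          Real.exp (Real.exp θ * (s * D) - θ * (s * y)) := by
        gcongr
        exact choose_le_exp_mul_one_add_log hK hn
    _ = q * Real.exp (s * (2 * (1 + Real.log K) + D * Real.exp θ - θ * y)) := by
        rw [sq, mul_assoc, ← Real.exp_add, ← Real.exp_add]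
        ring_nf

end ColoredGraph

section Asymptotics

lemma tendsto_log_natCast_atTop : Tendsto (fun n : ℕ ↦ Real.log n) atTop atTop :=
  Real.tendsto_log_atTop.comp tendsto_natCast_atTop_atTop

lemma tendsto_log_div_natCast_nhds_zero :
    Tendsto (fun n : ℕ ↦ Real.log n / n) atTop (nhds 0) :=
  Real.isLittleO_log_id_atTop.tendsto_div_nhds_zero.comp tendsto_natCast_atTop_atTop

/-- The common size `⌈γ n / log n⌉` of the two sides `S` and `T`. -/
noncomputable def sideSize (γ : ℝ) (n : ℕ) : ℕ := ⌈γ * n / Real.log n⌉₊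

variable {γ : ℝ}

lemma isBigO_sideSize (hγ : 0 < γ) :
    (fun n ↦ (sideSize γ n : ℝ)) =O[atTop] fun n : ℕ ↦ n / Real.log n := by
  have hratio : Tendsto (fun n : ℕ ↦ γ * n / Real.log n) atTop atTop := by
    have hpos : ∀ᶠ n : ℕ in atTop, 0 < Real.log n / n := by
      filter_upwards [tendsto_log_natCast_atTop.eventually_gt_atTop 0, eventually_gt_atTop 0]
        with n hlog hn
      positivity
    simpa [mul_div_assoc] using ((tendsto_nhdsWithin_iff.2
      ⟨tendsto_log_div_natCast_nhds_zero, hpos⟩).inv_tendsto_nhdsGT_zero).const_mul_atTop hγ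
  refine (isEquivalent_nat_ceil.comp_tendsto hratio).isBigO.trans ?_
  simpa [Function.comp_def, mul_div_assoc] using isBigO_const_mul_self γ _ _

lemma eventually_one_le_sideSize (hγ : 0 < γ) : ∀ᶠ n in atTop, 1 ≤ sideSize γ n := by
  filter_upwards [tendsto_log_natCast_atTop.eventually_gt_atTop 0, eventually_gt_atTop 0]
    with n hlog hn
  exact Nat.one_le_ceil_iff.2 (by positivity)

lemma le_log_div_mul_sideSize (hγ : 0 < γ) {n : ℕ} (hlog : 0 < Real.log n) :
    n ≤ Real.log n / γ * sideSize γ n :=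
  calc (n : ℝ) = Real.log n / γ * (γ * n / Real.log n) := by field_simp
    _ ≤ Real.log n / γ * sideSize γ n := by
        gcongr
        exact Nat.le_ceil _

lemma exists_eventually_sideSize_mul_le (hγ : 0 < γ) {p : ℕ → ℝ}
    (hp : p =O[atTop] fun n ↦ Real.log n / n) :
    ∃ D, ∀ᶠ n in atTop, sideSize γ n * p n ≤ D := by
  have hone : (fun n ↦ sideSize γ n * p n) =O[atTop] fun _ ↦ (1 : ℝ) := by
    refine ((isBigO_sideSize hγ).mul hp).congr' .rfl ?_
    filter_upwards [tendsto_log_natCast_atTop.eventually_gt_atTop 0, eventually_gt_atTop 0]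
      with n hlog hn
    field_simp
  obtain ⟨D, hD⟩ := hone.bound
  exact ⟨D, hD.mono fun n hn ↦ (le_abs_self _).trans (by simpa using hn)⟩

lemma isLittleO_sqrt_id_atTop : Real.sqrt =o[atTop] (id : ℝ → ℝ) := by
  refine isLittleO_of_tendsto' ((eventually_ne_atTop 0).mono fun L hL h ↦ absurd h hL) ?_
  simpa [Real.sqrt_div_self', Pi.inv_def] using Real.tendsto_sqrt_atTop.inv_tendsto_atTop

lemma tendsto_log_add_sqrt_sub_linear_atBot {δ : ℝ} (hγ : 0 < γ) (hδ : 0 < δ) (D : ℝ) :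
    Tendsto (fun L ↦ 2 * (1 + Real.log (L / γ)) + D * √L - δ * L / 2) atTop atBot := by
  have hlog : (fun L ↦ Real.log (L / γ)) =o[atTop] (id : ℝ → ℝ) := by
    refine (Real.isLittleO_log_id_atTop.comp_tendsto
      (tendsto_id.atTop_div_const hγ)).trans_isBigO ?_
    simpa [Function.comp_def, div_eq_inv_mul] using isBigO_const_mul_self γ⁻¹ (id : ℝ → ℝ) atTop
  have hlower : (fun L ↦ 2 * (1 + Real.log (L / γ)) + D * √L) =o[atTop] (id : ℝ → ℝ) :=
    (((isLittleO_const_id_atTop 1).add hlog).const_mul_left 2).add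
      (isLittleO_sqrt_id_atTop.const_mul_left D)
  have hlinear : Tendsto (fun L : ℝ ↦ -(δ / 2) * L) atTop atBot :=
    tendsto_id.const_mul_atTop_of_neg (by linarith)
  refine (IsEquivalent.refl.add_isLittleO
    (hlower.trans_isBigO (isBigO_self_const_mul (by linarith) id atTop))).symm.tendsto_atBot
    hlinear |>.congr fun L ↦ ?_
  simp only [Pi.add_apply, id]
  ring

lemma tendsto_graphM_real_denseColorEvent_nhds_zero {q : ℕ} {α : Fin q → ℝ} {δ : ℝ} {p : ℕ → ℝ}
    (hα : ∀ i, 0 ≤ α i) (hsum : ∑ i, α i = 1) (hγ : 0 < γ) (hδ : 0 < δ)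
    (hp : ∀ᶠ n in atTop, p n ∈ Set.Icc 0 1) (hpO : p =O[atTop] fun n ↦ Real.log n / n) :
    Tendsto (fun n : ℕ ↦ (graphM n q α (p n)).real (denseColorEvent n q (sideSize γ n)
      (δ * sideSize γ n * Real.log n / Real.log (Real.log n)))) atTop (nhds 0) := by
  obtain ⟨D, hD⟩ := exists_eventually_sideSize_mul_le hγ hpO
  let E : ℕ → ℝ := fun n ↦
    2 * (1 + Real.log (Real.log n / γ)) + D * √(Real.log n) - δ * Real.log n / 2
  have hE : Tendsto E atTop atBot :=
    (tendsto_log_add_sqrt_sub_linear_atBot hγ hδ D).comp tendsto_log_natCast_atTop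
  have hlim : Tendsto (fun n ↦ q * Real.exp (E n)) atTop (nhds 0) := by
    simpa using (Real.tendsto_exp_atBot.comp hE).const_mul (q : ℝ)
  refine squeeze_zero' (.of_forall fun n ↦ measureReal_nonneg) ?_ hlim
  filter_upwards [hp, hD, eventually_one_le_sideSize hγ, hE.eventually_le_atBot 0,
    tendsto_log_natCast_atTop.eventually_gt_atTop 1] with n hpn hDn hs hEn hlog
  have hloglog : 0 < Real.log (Real.log n) := Real.log_pos hlog
  have hlog0 : 0 < Real.log n := one_pos.trans hlog
  have hs' : (1 : ℝ) ≤ sideSize γ n := mod_cast hs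
  have hexp : Real.exp (Real.log (Real.log n) / 2) = √(Real.log n) := by
    rw [Real.exp_half, Real.exp_log hlog0]
  have hθ : Real.log (Real.log n) / 2 * (δ * Real.log n / Real.log (Real.log n)) =
      δ * Real.log n / 2 := by field_simp
  calc (graphM n q α (p n)).real (denseColorEvent n q (sideSize γ n)
        (δ * sideSize γ n * Real.log n / Real.log (Real.log n)))
      = (graphM n q α (p n)).real (denseColorEvent n q (sideSize γ n)
        (sideSize γ n * (δ * Real.log n / Real.log (Real.log n)))) := by ring_nf
    _ ≤ q * Real.exp (sideSize γ n * E n) := by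
        simpa only [hexp, hθ] using graphM_real_denseColorEvent_mul_le_exp hα hsum hpn
          (half_pos hloglog).le (div_pos hlog0 hγ) (le_log_div_mul_sideSize hγ hlog0) hDn
          (δ * Real.log n / Real.log (Real.log n))
    _ ≤ q * Real.exp (E n) := by
        gcongr
        exact mul_le_of_one_le_left hEn hs'

lemma isEquivalent_log_add {w : ℕ → ℝ} (hw : w =o[atTop] fun n ↦ Real.log n) :
    (fun n : ℕ ↦ Real.log n + w n) ~[atTop] fun n ↦ Real.log n :=
  IsEquivalent.refl.add_isLittleO hw

lemma eventually_log_add_div_nonneg {w : ℕ → ℝ} (hw : w =o[atTop] fun n ↦ Real.log n) :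
    ∀ᶠ n : ℕ in atTop, 0 ≤ (Real.log n + w n) / n := by
  filter_upwards [((isEquivalent_log_add hw).symm.tendsto_atTop
    tendsto_log_natCast_atTop).eventually_ge_atTop 0] with n hn
  exact div_nonneg hn n.cast_nonneg

lemma isBigO_log_add_div {w : ℕ → ℝ} (hw : w =o[atTop] fun n ↦ Real.log n) :
    (fun n : ℕ ↦ (Real.log n + w n) / n) =O[atTop] fun n ↦ Real.log n / n :=
  ((isEquivalent_log_add hw).div .refl).isBigO

end Asymptotics

theorem lemma_e_general (q : ℕ) (α : Fin q → ℝ) (hα : ∀ i, 0 ≤ α i) (hsum : ∑ i, α i = 1)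
    (γ δ : ℝ) (hγ : 0 < γ) (hδ : 0 < δ) (p : ℕ → ℝ) (hp0 : ∀ᶠ n in atTop, 0 ≤ p n)
    (hpO : p =O[atTop] fun n ↦ Real.log n / n) :
    Tendsto (fun n =>
      graphM n q α (p n)
        {f | ¬ ∃ (i : Fin q) (S T : Finset (Fin n)),
          S.card = ⌈γ * n / Real.log n⌉₊ ∧ T.card = ⌈γ * n / Real.log n⌉₊ ∧
          δ * S.card * Real.log n / Real.log (Real.log n) ≤
            (((S ×ˢ T).filter fun e => f e = some i).card : ℝ)})
      atTop (nhds 1) := by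
  have hp : ∀ᶠ n in atTop, p n ∈ Set.Icc 0 1 :=
    hp0.and <| (hpO.trans_tendsto tendsto_log_div_natCast_nhds_zero).eventually_le_const one_pos
  have hcompl := tendsto_measure_compl_of_tendsto_measureReal_zero (fun _ ↦ .of_discrete)
    (hp.mono fun n hpn ↦ isProbabilityMeasure_graphM hα hsum hpn)
    (tendsto_graphM_real_denseColorEvent_nhds_zero hα hsum hγ hδ hp hpO)
  refine hcompl.congr fun n ↦ ?_
  congr 1 with f
  refine not_congr <| exists_congr fun i ↦ exists_congr fun S ↦ exists_congr fun T ↦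
    and_congr_right fun hS ↦ and_congr_right fun _ ↦ ?_
  rw [hS]
  rfl

/-- Lemma 2(e): for constants `γ, δ > 0`, w.h.p. there are no color `i` and sets
`S ⊆ A`, `T ⊆ B` with `|S| = |T| = ⌈γ n/log n⌉` carrying at least `δ |S| log n/log log n`
edges of color `cᵢ`. -/
theorem lemma_e (q : ℕ) (hq : 1 ≤ q) (α : Fin q → ℝ)
    (hα : ∀ i, 0 < α i) (hsum : ∑ i, α i = 1)
    (γ δ : ℝ) (hγ : 0 < γ) (hδ : 0 < δ)
    (w : ℕ → ℝ) (hw : Tendsto w atTop atTop)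
    (hwo : w =o[atTop] fun n => Real.log n) :
    Tendsto (fun n =>
      graphM n q α ((Real.log n + w n) / n)
        {f | ¬ ∃ (i : Fin q) (S T : Finset (Fin n)),
          S.card = ⌈γ * n / Real.log n⌉₊ ∧ T.card = ⌈γ * n / Real.log n⌉₊ ∧
          δ * S.card * Real.log n / Real.log (Real.log n) ≤
            (((S ×ˢ T).filter fun e => f e = some i).card : ℝ)})
      atTop (nhds 1) :=
  lemma_e_general q α (fun i ↦ (hα i).le) hsum γ δ hγ hδ _
    (eventually_log_add_div_nonneg hwo) (isBigO_log_add_div hwo)
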